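/- Let l, m, n ≥ 1 and let S(u,v,w) = Σ_{i=0}^{l} Σ_{j=0}^{m} Σ_{k=0}^{n} P_{ijk} B_i^{l}(u) B_j^{m}(v) B_k^{n}(w) be a trivariate Bézier map with control points P_{ijk} ∈ ℝ³. Then the Jacobian determinant admits the Bernstein expansion J(u,v,w) = Σ_{i=0}^{3l−1} Σ_{j=0}^{3m−1} Σ_{k=0}^{3n−1} J_{ijk} B_i^{3l−1}(u) B_j^{3m−1}(v) B_k^{3n−1}(w), where J_{ijk} = Σ D_{i₁i₂i₃,j₁j₂j₃,k₁k₂k₃} · det(P_{(i₁+1),j₁,k₁} − P_{i₁,j₁,k₁}; P_{i₂,(j₂+1),k₂} − P_{i₂,j₂,k₂}; P_{i₃,j₃,(k₃+1)} − P_{i₃,j₃,k₃}), the sum running over all i₁+i₂+i₃ = i with i₁ ∈ [0,l−1], i₂, i₃ ∈ [0,l], all j₁+j₂+j₃ = j with j₁, j₃ ∈ [0,m], j₂ ∈ [0,m−1], and all k₁+k₂+k₃ = k with k₁, k₂ ∈ [0,n], k₃ ∈ [0,n−1], and where D_{i₁i₂i₃,j₁j₂j₃,k₁k₂k₃} = l·m·n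 · C(l−1,i₁)C(l,i₂)C(l,i₃)·C(m,j₁)C(m−1,j₂)C(m,j₃)·C(n,k₁)C(n,k₂)C(n−1,k₃) / [C(3l−1,i)·C(3m−1,j)·C(3n−1,k)]. -/

import Mathlib

open Finset

/-- The Bernstein polynomial `B_i^n(t) = C(n,i) t^i (1-t)^(n-i)`. -/
noncomputable def bern (n i : ℕ) (t : ℝ) : ℝ :=
  (n.choose i : ℝ) * t ^ i * (1 - t) ^ (n - i)

/-- The trivariate Bézier map of degree `(l,m,n)` with control points `P_{ijk} ∈ ℝ³`. -/
noncomputable def bezierMap (l m n : ℕ) (P : ℕ → ℕ → ℕ → (Fin 3 → ℝ))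
    (u v w : ℝ) : Fin 3 → ℝ :=
  ∑ i ∈ range (l + 1), ∑ j ∈ range (m + 1), ∑ k ∈ range (n + 1),
    (bern l i u * bern m j v * bern n k w) • P i j k

/-- The Jacobian determinant of a trivariate Bézier map: the determinant of the 3×3
matrix whose rows are the partial derivatives `∂S/∂u`, `∂S/∂v`, `∂S/∂w`. -/
noncomputable def bezierJacobianDet (l m n : ℕ) (P : ℕ → ℕ → ℕ → (Fin 3 → ℝ))
    (u v w : ℝ) : ℝ :=
  (Matrix.of
    ![deriv (fun u' : ℝ => bezierMap l m n P u' v w) u,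
      deriv (fun v' : ℝ => bezierMap l m n P u v' w) v,
      deriv (fun w' : ℝ => bezierMap l m n P u v w') w]).det

/-- The coefficient `D_{i₁i₂i₃,j₁j₂j₃,k₁k₂k₃}` from Eq. (18). -/
noncomputable def Dcoef (l m n i j k i₁ i₂ i₃ j₁ j₂ j₃ k₁ k₂ k₃ : ℕ) : ℝ :=
  (l : ℝ) * (m : ℝ) * (n : ℝ) *
    (((l - 1).choose i₁ : ℝ) * (l.choose i₂ : ℝ) * (l.choose i₃ : ℝ) *
      (m.choose j₁ : ℝ) * ((m - 1).choose j₂ : ℝ) * (m.choose j₃ : ℝ) *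
      (n.choose k₁ : ℝ) * (n.choose k₂ : ℝ) * ((n - 1).choose k₃ : ℝ)) /
    (((3 * l - 1).choose i : ℝ) * ((3 * m - 1).choose j : ℝ) * ((3 * n - 1).choose k : ℝ))

/-- The Bernstein coefficient `J_{ijk}` of the Jacobian determinant: the sum over all
`i₁+i₂+i₃ = i` with `i₁ ∈ [0,l−1]`, `i₂,i₃ ∈ [0,l]`, all `j₁+j₂+j₃ = j` with
`j₁,j₃ ∈ [0,m]`, `j₂ ∈ [0,m−1]`, and all `k₁+k₂+k₃ = k` with `k₁,k₂ ∈ [0,n]`,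
`k₃ ∈ [0,n−1]`, of `D · det(ΔP-rows)`. -/
noncomputable def Jcoef (l m n : ℕ) (P : ℕ → ℕ → ℕ → (Fin 3 → ℝ)) (i j k : ℕ) : ℝ :=
  ∑ i₁ ∈ range l, ∑ i₂ ∈ range (l + 1), ∑ i₃ ∈ range (l + 1),
    ∑ j₁ ∈ range (m + 1), ∑ j₂ ∈ range m, ∑ j₃ ∈ range (m + 1),
      ∑ k₁ ∈ range (n + 1), ∑ k₂ ∈ range (n + 1), ∑ k₃ ∈ range n,
        if i₁ + i₂ + i₃ = i ∧ j₁ + j₂ + j₃ = j ∧ k₁ + k₂ + k₃ = k then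
          Dcoef l m n i j k i₁ i₂ i₃ j₁ j₂ j₃ k₁ k₂ k₃ *
            (Matrix.of
              ![P (i₁ + 1) j₁ k₁ - P i₁ j₁ k₁,
                P i₂ (j₂ + 1) k₂ - P i₂ j₂ k₂,
                P i₃ j₃ (k₃ + 1) - P i₃ j₃ k₃]).det
        else 0

/-!
Both the derivative of a Bézier curve and a trilinear expression in three Bézier curves are again
Bézier curves: differentiation lowers the degree by one and takes differences of control points,
while multiplication adds degrees and convolves control points, because a product of Bernstein
polynomials is a multiple of a single one. A trivariate Bézier map is a Bézier curve in each of its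
variables, so `J`, which is the triple product of the three partial derivatives of `S`, is computed
one variable at a time.
-/

section Bernstein

theorem bern_eq_eval_bernsteinPolynomial (n i : ℕ) (t : ℝ) :
    bern n i t = (bernsteinPolynomial ℝ n i).eval t := by
  simp [bern, bernsteinPolynomial]

theorem bern_eq_zero_of_lt {n i : ℕ} (h : n < i) (t : ℝ) : bern n i t = 0 := by
  simp [bern, Nat.choose_eq_zero_of_lt h]

theorem hasDerivAt_bern_zero (n : ℕ) (t : ℝ) :
    HasDerivAt (bern n 0) (-(n * bern (n - 1) 0 t)) t := by
  have h := (bernsteinPolynomial ℝ n 0).hasDerivAt t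
  rw [bernsteinPolynomial.derivative_zero] at h
  simpa [← bern_eq_eval_bernsteinPolynomial] using h

theorem hasDerivAt_bern_succ (n i : ℕ) (t : ℝ) :
    HasDerivAt (bern n (i + 1)) (n * (bern (n - 1) i t - bern (n - 1) (i + 1) t)) t := by
  have h := (bernsteinPolynomial ℝ n (i + 1)).hasDerivAt t
  rw [bernsteinPolynomial.derivative_succ] at h
  simpa [← bern_eq_eval_bernsteinPolynomial] using h

theorem bern_mul_bern_mul_bern {a b c i j k : ℕ} (hi : i ≤ a) (hj : j ≤ b) (hk : k ≤ c) (t : ℝ) :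
    bern a i t * bern b j t * bern c k t =
      (a.choose i * b.choose j * c.choose k / (a + b + c).choose (i + j + k) : ℝ) *
        bern (a + b + c) (i + j + k) t := by
  have hchoose : ((a + b + c).choose (i + j + k) : ℝ) ≠ 0 :=
    Nat.cast_ne_zero.2 (Nat.choose_pos (by omega)).ne'
  have hsub : a + b + c - (i + j + k) = (a - i) + (b - j) + (c - k) := by omega
  simp only [bern, hsub, pow_add]
  rw [div_mul_eq_mul_div, eq_div_iff hchoose]
  ring

end Bernstein

/-- The Bézier curve of degree `n` with control points `x 0, …, x n` in a real vector space; the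
values of `x` beyond `n` are ignored. -/
noncomputable def bezierCurve {E : Type*} [AddCommMonoid E] [Module ℝ E] (n : ℕ) (x : ℕ → E)
    (t : ℝ) : E :=
  ∑ i ∈ range (n + 1), bern n i t • x i

/-- The control points of the product of three Bézier curves of degrees `a`, `b`, `c`, where
`f i j k` is the product of their control points with indices `i`, `j`, `k`. The product is
abstracted into `f` so that convolutions can be nested. -/
noncomputable def bernsteinConvolution {E : Type*} [AddCommMonoid E] [Module ℝ E] (a b c : ℕ)
    (f : ℕ → ℕ → ℕ → E) (s : ℕ) : E :=
  ∑ i ∈ range (a + 1), ∑ j ∈ range (b + 1), ∑ k ∈ range (c + 1),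
    if i + j + k = s then
      (a.choose i * b.choose j * c.choose k / (a + b + c).choose s : ℝ) • f i j k
    else 0

/-- The trivariate Bézier map of degree `(l, m, n)` with control points in a real vector space,
as a Bézier curve in `u` whose control points are Bézier curves in `v`, whose control points are
in turn Bézier curves in `w`; this makes the calculus of Bézier curves apply one variable at a
time. -/
noncomputable def tensorBezier {E : Type*} [AddCommMonoid E] [Module ℝ E] (l m n : ℕ)
    (P : ℕ → ℕ → ℕ → E) (u v w : ℝ) : E :=
  bezierCurve l (fun i => bezierCurve m (fun j => bezierCurve n (P i j) w) v) u

section Linear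

theorem bezierCurve_sub {E : Type*} [AddCommGroup E] [Module ℝ E] (n : ℕ) (x y : ℕ → E)
    (t : ℝ) :
    bezierCurve n (fun i => x i - y i) t = bezierCurve n x t - bezierCurve n y t := by
  simp only [bezierCurve, smul_sub, sum_sub_distrib]

variable {E : Type*} [AddCommMonoid E] [Module ℝ E]

theorem bezierCurve_smul (n : ℕ) (c : ℝ) (x : ℕ → E) (t : ℝ) :
    bezierCurve n (fun i => c • x i) t = c • bezierCurve n x t := by
  simp only [bezierCurve, smul_sum, smul_comm c]

theorem tensorBezier_smul (l m n : ℕ) (c : ℝ) (P : ℕ → ℕ → ℕ → E) (u v w : ℝ) :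
    tensorBezier l m n (fun i j k => c • P i j k) u v w = c • tensorBezier l m n P u v w := by
  simp only [tensorBezier, bezierCurve_smul]

theorem tensorBezier_eq_sum (l m n : ℕ) (P : ℕ → ℕ → ℕ → E) (u v w : ℝ) :
    tensorBezier l m n P u v w =
      ∑ i ∈ range (l + 1), ∑ j ∈ range (m + 1), ∑ k ∈ range (n + 1),
        (bern l i u * bern m j v * bern n k w) • P i j k := by
  simp only [tensorBezier, bezierCurve, smul_sum, smul_smul, mul_assoc]

end Linear

section Product

variable {E F G H : Type*} [AddCommMonoid E] [Module ℝ E] [AddCommMonoid F] [Module ℝ F]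
  [AddCommMonoid G] [Module ℝ G] [AddCommMonoid H] [Module ℝ H]

theorem bezierCurve_bernsteinConvolution (a b c : ℕ) (f : ℕ → ℕ → ℕ → E) (t : ℝ) :
    bezierCurve (a + b + c) (bernsteinConvolution a b c f) t =
      ∑ i ∈ range (a + 1), ∑ j ∈ range (b + 1), ∑ k ∈ range (c + 1),
        (bern a i t * bern b j t * bern c k t) • f i j k := by
  simp only [bezierCurve, bernsteinConvolution, smul_sum, smul_ite, smul_zero, smul_smul]
  rw [sum_comm]
  refine sum_congr rfl fun i hi => ?_
  rw [sum_comm]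
  refine sum_congr rfl fun j hj => ?_
  rw [sum_comm]
  refine sum_congr rfl fun k hk => ?_
  rw [mem_range, Nat.lt_succ_iff] at hi hj hk
  rw [sum_ite_eq, if_pos (mem_range.2 (by omega)), bern_mul_bern_mul_bern hi hj hk, mul_comm]

theorem map_bezierCurve₃ (T : E →ₗ[ℝ] F →ₗ[ℝ] G →ₗ[ℝ] H) (a b c : ℕ) (x : ℕ → E) (y : ℕ → F)
    (z : ℕ → G) (t : ℝ) :
    T (bezierCurve a x t) (bezierCurve b y t) (bezierCurve c z t) =
      bezierCurve (a + b + c) (bernsteinConvolution a b c fun i j k => T (x i) (y j) (z k)) t := by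
  rw [bezierCurve_bernsteinConvolution]
  simp only [bezierCurve, map_sum, map_smul, LinearMap.sum_apply, LinearMap.smul_apply,
    smul_sum, smul_smul]
  rw [sum_comm_cycle]
  refine sum_congr rfl fun i _ => ?_
  rw [sum_comm]
  refine sum_congr rfl fun j _ => sum_congr rfl fun k _ => ?_
  rw [mul_comm, mul_comm (bern b j t)]

theorem bernsteinConvolution_bezierCurve (a b c n : ℕ) (f : ℕ → ℕ → ℕ → ℕ → E) (t : ℝ) :
    bernsteinConvolution a b c (fun i j k => bezierCurve n (f i j k) t) =
      fun s =>
        bezierCurve n (fun p => bernsteinConvolution a b c (fun i j k => f i j k p) s) t := by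
  funext s
  simp only [bezierCurve, bernsteinConvolution, smul_sum]
  rw [sum_comm (s := range (n + 1))]
  refine sum_congr rfl fun i _ => ?_
  rw [sum_comm (s := range (n + 1))]
  refine sum_congr rfl fun j _ => ?_
  rw [sum_comm (s := range (n + 1))]
  refine sum_congr rfl fun k _ => ?_
  split_ifs
  · exact sum_congr rfl fun p _ => smul_comm _ _ _
  · simp only [smul_zero, sum_const_zero]

theorem map_tensorBezier₃ (T : E →ₗ[ℝ] F →ₗ[ℝ] G →ₗ[ℝ] H) (l₁ l₂ l₃ m₁ m₂ m₃ n₁ n₂ n₃ : ℕ)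
    (A : ℕ → ℕ → ℕ → E) (B : ℕ → ℕ → ℕ → F) (C : ℕ → ℕ → ℕ → G) (u v w : ℝ) :
    T (tensorBezier l₁ m₁ n₁ A u v w) (tensorBezier l₂ m₂ n₂ B u v w)
        (tensorBezier l₃ m₃ n₃ C u v w) =
      tensorBezier (l₁ + l₂ + l₃) (m₁ + m₂ + m₃) (n₁ + n₂ + n₃)
        (fun i j k =>
          bernsteinConvolution l₁ l₂ l₃ (fun i₁ i₂ i₃ =>
            bernsteinConvolution m₁ m₂ m₃ (fun j₁ j₂ j₃ =>
              bernsteinConvolution n₁ n₂ n₃ (fun k₁ k₂ k₃ =>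
                T (A i₁ j₁ k₁) (B i₂ j₂ k₂) (C i₃ j₃ k₃)) k) j) i) u v w := by
  simp only [tensorBezier, map_bezierCurve₃, bernsteinConvolution_bezierCurve]

end Product

section Derivative

variable {E : Type*} [NormedAddCommGroup E] [NormedSpace ℝ E]

theorem hasDerivAt_bezierCurve (n : ℕ) (x : ℕ → E) (t : ℝ) :
    HasDerivAt (bezierCurve n x)
      ((n : ℝ) • bezierCurve (n - 1) (fun i => x (i + 1) - x i) t) t := by
  rcases n with _ | n
  · have hconst : bezierCurve 0 x = fun _ => x 0 := by
      funext τ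
      simp [bezierCurve, bern]
    simpa [hconst] using hasDerivAt_const t (x 0)
  have hterms : HasDerivAt (fun τ => ∑ i ∈ range (n + 1), bern (n + 1) (i + 1) τ • x (i + 1) +
        bern (n + 1) 0 τ • x 0)
      (∑ i ∈ range (n + 1), ((n + 1 : ℕ) * (bern n i t - bern n (i + 1) t)) • x (i + 1) +
        (-((n + 1 : ℕ) * bern n 0 t)) • x 0) t :=
    (HasDerivAt.fun_sum fun i _ => (hasDerivAt_bern_succ (n + 1) i t).smul_const _).fun_add
      ((hasDerivAt_bern_zero (n + 1) t).smul_const _)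
  have hcurve : bezierCurve (n + 1) x = fun τ =>
      ∑ i ∈ range (n + 1), bern (n + 1) (i + 1) τ • x (i + 1) + bern (n + 1) 0 τ • x 0 :=
    funext fun τ => sum_range_succ' _ _
  have hshift : ∑ i ∈ range (n + 1), bern n i t • x i =
      ∑ i ∈ range (n + 1), bern n (i + 1) t • x (i + 1) + bern n 0 t • x 0 := by
    rw [← sum_range_succ' (fun i => bern n i t • x i), sum_range_succ _ (n + 1),
      bern_eq_zero_of_lt n.lt_succ_self, zero_smul, add_zero]
  rw [hcurve]
  refine hterms.congr_deriv ?_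
  simp only [bezierCurve, Nat.add_sub_cancel, smul_sub, sum_sub_distrib, hshift, mul_smul,
    sub_smul, neg_smul, ← smul_sum]
  module

theorem hasDerivAt_bezierCurve_controlPoints {x : ℝ → ℕ → E} {x' : ℕ → E} {t : ℝ} (n : ℕ) (s : ℝ)
    (hx : ∀ i, HasDerivAt (fun τ => x τ i) (x' i) t) :
    HasDerivAt (fun τ => bezierCurve n (x τ) s) (bezierCurve n x' s) t :=
  HasDerivAt.fun_sum fun i _ => (hx i).const_smul (bern n i s)

theorem hasDerivAt_tensorBezier_fst (l m n : ℕ) (P : ℕ → ℕ → ℕ → E) (u v w : ℝ) :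
    HasDerivAt (fun u' => tensorBezier l m n P u' v w)
      ((l : ℝ) • tensorBezier (l - 1) m n (fun i j k => P (i + 1) j k - P i j k) u v w) u := by
  simpa only [tensorBezier, bezierCurve_sub] using hasDerivAt_bezierCurve l _ u

theorem hasDerivAt_tensorBezier_snd (l m n : ℕ) (P : ℕ → ℕ → ℕ → E) (u v w : ℝ) :
    HasDerivAt (fun v' => tensorBezier l m n P u v' w)
      ((m : ℝ) • tensorBezier l (m - 1) n (fun i j k => P i (j + 1) k - P i j k) u v w) v := by
  simpa only [tensorBezier, bezierCurve_sub, bezierCurve_smul] using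
    hasDerivAt_bezierCurve_controlPoints l u fun i =>
      hasDerivAt_bezierCurve m (fun j => bezierCurve n (P i j) w) v

theorem hasDerivAt_tensorBezier_thd (l m n : ℕ) (P : ℕ → ℕ → ℕ → E) (u v w : ℝ) :
    HasDerivAt (fun w' => tensorBezier l m n P u v w')
      ((n : ℝ) • tensorBezier l m (n - 1) (fun i j k => P i j (k + 1) - P i j k) u v w) w := by
  simpa only [tensorBezier, bezierCurve_smul] using
    hasDerivAt_bezierCurve_controlPoints l u fun i =>
      hasDerivAt_bezierCurve_controlPoints m v fun j => hasDerivAt_bezierCurve n (P i j) w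

end Derivative

section Jacobian

/-- The scalar triple product `(x × y) · z` as a trilinear map. -/
def tripleProduct (R : Type*) [CommRing R] :
    (Fin 3 → R) →ₗ[R] (Fin 3 → R) →ₗ[R] (Fin 3 → R) →ₗ[R] R :=
  crossProduct.compr₂ (dotProductBilin R R)

theorem tripleProduct_eq_det {R : Type*} [CommRing R] (x y z : Fin 3 → R) :
    tripleProduct R x y z = (Matrix.of ![x, y, z]).det :=
  calc tripleProduct R x y z = crossProduct x y ⬝ᵥ z := rfl
    _ = x ⬝ᵥ crossProduct y z := by
      rw [dotProduct_comm, triple_product_permutation]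
    _ = (Matrix.of ![x, y, z]).det := triple_product_eq_det x y z

theorem bezierMap_eq_tensorBezier (l m n : ℕ) (P : ℕ → ℕ → ℕ → Fin 3 → ℝ) :
    bezierMap l m n P = tensorBezier l m n P := by
  funext u v w
  exact (tensorBezier_eq_sum l m n P u v w).symm

theorem bezierJacobianDet_eq_tripleProduct (l m n : ℕ) (P : ℕ → ℕ → ℕ → Fin 3 → ℝ) (u v w : ℝ) :
    bezierJacobianDet l m n P u v w =
      l * m * n * tripleProduct ℝ
        (tensorBezier (l - 1) m n (fun i j k => P (i + 1) j k - P i j k) u v w)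
        (tensorBezier l (m - 1) n (fun i j k => P i (j + 1) k - P i j k) u v w)
        (tensorBezier l m (n - 1) (fun i j k => P i j (k + 1) - P i j k) u v w) := by
  rw [bezierJacobianDet, bezierMap_eq_tensorBezier,
    (hasDerivAt_tensorBezier_fst l m n P u v w).deriv,
    (hasDerivAt_tensorBezier_snd l m n P u v w).deriv,
    (hasDerivAt_tensorBezier_thd l m n P u v w).deriv, ← tripleProduct_eq_det]
  simp only [map_smul, LinearMap.smul_apply, smul_eq_mul]
  ring

theorem Dcoef_eq_mul_div (l m n i j k i₁ i₂ i₃ j₁ j₂ j₃ k₁ k₂ k₃ : ℕ) :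
    Dcoef l m n i j k i₁ i₂ i₃ j₁ j₂ j₃ k₁ k₂ k₃ =
      l * m * n *
        (((l - 1).choose i₁ * l.choose i₂ * l.choose i₃ / (3 * l - 1).choose i) *
          (m.choose j₁ * (m - 1).choose j₂ * m.choose j₃ / (3 * m - 1).choose j) *
          (n.choose k₁ * n.choose k₂ * (n - 1).choose k₃ / (3 * n - 1).choose k)) := by
  rw [Dcoef, div_mul_div_comm, div_mul_div_comm, mul_div_assoc]
  simp only [mul_assoc]

theorem Jcoef_eq_bernsteinConvolution {l m n : ℕ} (hl : 1 ≤ l) (hm : 1 ≤ m) (hn : 1 ≤ n)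
    (P : ℕ → ℕ → ℕ → Fin 3 → ℝ) (i j k : ℕ) :
    Jcoef l m n P i j k =
      l * m * n * bernsteinConvolution (l - 1) l l (fun i₁ i₂ i₃ =>
        bernsteinConvolution m (m - 1) m (fun j₁ j₂ j₃ =>
          bernsteinConvolution n n (n - 1) (fun k₁ k₂ k₃ =>
            tripleProduct ℝ (P (i₁ + 1) j₁ k₁ - P i₁ j₁ k₁) (P i₂ (j₂ + 1) k₂ - P i₂ j₂ k₂)
              (P i₃ j₃ (k₃ + 1) - P i₃ j₃ k₃)) k) j) i := by
  have hdegl : l - 1 + l + l = 3 * l - 1 := by omega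
  have hdegm : m + (m - 1) + m = 3 * m - 1 := by omega
  have hdegn : n + n + (n - 1) = 3 * n - 1 := by omega
  simp only [Jcoef, bernsteinConvolution, hdegl, hdegm, hdegn, Nat.sub_add_cancel hl,
    Nat.sub_add_cancel hm, Nat.sub_add_cancel hn, ← tripleProduct_eq_det, smul_eq_mul, mul_sum,
    mul_ite, mul_zero, ite_and, ← ite_sum_zero]
  simp only [Dcoef_eq_mul_div, mul_assoc]

theorem bezierJacobianDet_eq_tensorBezier {l m n : ℕ} (hl : 1 ≤ l) (hm : 1 ≤ m) (hn : 1 ≤ n)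
    (P : ℕ → ℕ → ℕ → Fin 3 → ℝ) (u v w : ℝ) :
    bezierJacobianDet l m n P u v w =
      tensorBezier (3 * l - 1) (3 * m - 1) (3 * n - 1) (Jcoef l m n P) u v w := by
  have hdegl : l - 1 + l + l = 3 * l - 1 := by omega
  have hdegm : m + (m - 1) + m = 3 * m - 1 := by omega
  have hdegn : n + n + (n - 1) = 3 * n - 1 := by omega
  rw [bezierJacobianDet_eq_tripleProduct, map_tensorBezier₃, hdegl, hdegm, hdegn, ← smul_eq_mul,
    ← tensorBezier_smul]
  simp only [smul_eq_mul, ← Jcoef_eq_bernsteinConvolution hl hm hn]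

end Jacobian

/-- Bernstein expansion of the Jacobian determinant of a trivariate Bézier map:
`J(u,v,w) = Σ_{i=0}^{3l−1} Σ_{j=0}^{3m−1} Σ_{k=0}^{3n−1} J_{ijk} B_i^{3l−1}(u) B_j^{3m−1}(v) B_k^{3n−1}(w)`
with the explicit coefficients `J_{ijk}` above. -/
theorem bezier_jacobian_det_expansion (l m n : ℕ) (hl : 1 ≤ l) (hm : 1 ≤ m)
    (hn : 1 ≤ n) (P : ℕ → ℕ → ℕ → (Fin 3 → ℝ)) (u v w : ℝ) :
    bezierJacobianDet l m n P u v w =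
      ∑ i ∈ range (3 * l), ∑ j ∈ range (3 * m), ∑ k ∈ range (3 * n),
        Jcoef l m n P i j k *
          bern (3 * l - 1) i u * bern (3 * m - 1) j v * bern (3 * n - 1) k w := by
  have hcard {d : ℕ} (hd : 1 ≤ d) : 3 * d - 1 + 1 = 3 * d := by omega
  rw [bezierJacobianDet_eq_tensorBezier hl hm hn, tensorBezier_eq_sum, hcard hl, hcard hm,
    hcard hn]
  refine sum_congr rfl fun i _ => sum_congr rfl fun j _ => sum_congr rfl fun k _ => ?_
  rw [smul_eq_mul, mul_comm]
  simp only [mul_assoc]
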